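/- Let p, p' ∈ ℤ² with p.y < 0, p'.y < 0 and p.x < p'.x, and let ≺_p, ≺_{p'} be the waterline orders assigned to p and p'. Then no two integers form a bad pair for (≺_p, p) and (≺_{p'}, p'). -/

import Mathlib

open scoped Classical

/-- Points of the digital plane. -/
abbrev Pt : Type := ℤ × ℤ

/-- `q` lies in the closed first quadrant of `p`. -/
def Quad1 (p q : Pt) : Prop := p.1 ≤ q.1 ∧ p.2 ≤ q.2

/-- The number of elements `y` of the finite set `J` with `y ≺ x` or `y = x`. -/
noncomputable def rankLE (lt : ℤ → ℤ → Prop) (J : Finset ℤ) (x : ℤ) : ℤ :=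
  ((J.filter fun y => lt y x ∨ y = x).card : ℤ)

/-- `x` is among the `k` smallest elements of `J` with respect to the linear order `lt`. -/
def AmongSmallest (lt : ℤ → ℤ → Prop) (J : Finset ℤ) (k x : ℤ) : Prop :=
  x ∈ J ∧ rankLE lt J x ≤ k

/-- The interval `I(p,q) = [p.x+p.y, q.x+q.y-1]`. -/
noncomputable def Ival (p q : Pt) : Finset ℤ := Finset.Icc (p.1 + p.2) (q.1 + q.2 - 1)

/-- Membership in `H(lt,p,q)`: the `q.x - p.x` smallest elements of `I(p,q)` w.r.t. `lt`. -/
def Hmem (lt : ℤ → ℤ → Prop) (p q : Pt) (a : ℤ) : Prop :=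
  AmongSmallest lt (Ival p q) (q.1 - p.1) a

/-- The digital segment `R(lt,p,q)` for `q ∈ Q¹_p`, generated by the linear order `lt`. -/
noncomputable def seg (lt : ℤ → ℤ → Prop) (p q : Pt) : Set Pt :=
  {r : Pt | p.1 ≤ r.1 ∧ r.1 ≤ q.1 ∧ p.2 ≤ r.2 ∧ r.2 ≤ q.2 ∧
    p.1 + p.2 ≤ r.1 + r.2 ∧ r.1 + r.2 ≤ q.1 + q.2 ∧
    r.1 - p.1 =
      (((Finset.Icc (p.1 + p.2) (r.1 + r.2 - 1)).filter fun a => Hmem lt p q a).card : ℤ)}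

/-- `(t₁,t₂)` is a witness to the violation of (S3) for the pair of sets `(S,S')`. -/
def Witness (S S' : Set Pt) (t₁ t₂ : Pt) : Prop :=
  t₁ ∈ S ∧ t₁ ∈ S' ∧ t₂ ∈ S ∧ t₂ ∈ S' ∧
  t₁.1 + t₁.2 < t₂.1 + t₂.2 ∧
  ((t₁.1 + 1, t₁.2) : Pt) ∈ S ∧ ((t₁.1, t₁.2 + 1) : Pt) ∈ S' ∧
  ((t₂.1, t₂.2 - 1) : Pt) ∈ S ∧ ((t₂.1 - 1, t₂.2) : Pt) ∈ S'

/-- `a ≠ b` form a bad pair for `(lt,p)` and `(lt',p')`, where `p.x ≤ p'.x`. -/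
def BadPair (lt lt' : ℤ → ℤ → Prop) (p p' : Pt) (a b : ℤ) : Prop :=
  a ≠ b ∧ ∃ C ℓ : ℤ, p.1 + p.2 ≤ C ∧ p'.1 + p'.2 ≤ C ∧
    a ∈ Finset.Icc (p.1 + p.2) (C - 1) ∧ b ∈ Finset.Icc (p.1 + p.2) (C - 1) ∧
    a ∈ Finset.Icc (p'.1 + p'.2) (C - 1) ∧ b ∈ Finset.Icc (p'.1 + p'.2) (C - 1) ∧
    AmongSmallest lt (Finset.Icc (p.1 + p.2) (C - 1)) ℓ a ∧
    ¬ AmongSmallest lt (Finset.Icc (p.1 + p.2) (C - 1)) ℓ b ∧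
    AmongSmallest lt' (Finset.Icc (p'.1 + p'.2) (C - 1)) (ℓ - (p'.1 - p.1)) b ∧
    ¬ AmongSmallest lt' (Finset.Icc (p'.1 + p'.2) (C - 1)) (ℓ - (p'.1 - p.1)) a

/-- Bad pair for arbitrary `p, p'`: for `p.x > p'.x` the roles of `p` and `p'` are exchanged. -/
def BadPairSym (lt lt' : ℤ → ℤ → Prop) (p p' : Pt) (a b : ℤ) : Prop :=
  (p.1 ≤ p'.1 ∧ BadPair lt lt' p p' a b) ∨ (p'.1 ≤ p.1 ∧ BadPair lt' lt p' p a b)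

/-- Adjacency in the unit grid graph on `ℤ²`. -/
def GridAdj (u v : Pt) : Prop := |u.1 - v.1| + |u.2 - v.2| = 1

/-- `S` is the vertex set of a path from `p` to `q` in the unit grid graph. -/
def IsGridPath (S : Set Pt) (p q : Pt) : Prop :=
  ∃ (n : ℕ) (f : ℕ → Pt), f 0 = p ∧ f n = q ∧
    (∀ i, i < n → GridAdj (f i) (f (i + 1))) ∧
    (∀ i j, i ≤ n → j ≤ n → f i = f j → i = j) ∧
    S = {r : Pt | ∃ i, i ≤ n ∧ f i = r}

/-- The pair `p, q` has nonnegative slope. -/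
def NonnegPair (p q : Pt) : Prop := (p.1 ≤ q.1 ∧ p.2 ≤ q.2) ∨ (q.1 ≤ p.1 ∧ q.2 ≤ p.2)

/-- A nonnegative-slope digital segment system `R` is a CDS: properties (S1)-(S5). -/
def IsCDS (R : Pt → Pt → Set Pt) : Prop :=
  ∀ p q : Pt, NonnegPair p q →
    IsGridPath (R p q) p q ∧
    R p q = R q p ∧
    (∀ r s : Pt, r ∈ R p q → s ∈ R p q → NonnegPair r s → R r s ⊆ R p q) ∧
    (∃ r : Pt, r ∉ R p q ∧ NonnegPair p r ∧ R p q ⊆ R p r) ∧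
    (p.1 = q.1 → ∀ r ∈ R p q, r.1 = p.1) ∧
    (p.2 = q.2 → ∀ r ∈ R p q, r.2 = p.2)

/-- The nonnegative-slope digital segment system generated by an assignment of
linear orders to the points of `ℤ²`. -/
noncomputable def genR (ord : Pt → ℤ → ℤ → Prop) (p q : Pt) : Set Pt :=
  if p.1 ≤ q.1 ∧ p.2 ≤ q.2 then seg (ord p) p q else seg (ord q) q p

/-- The orders `lt` at `p` and `lt'` at `p'` are in agreement. -/
def Agree (p p' : Pt) (lt lt' : ℤ → ℤ → Prop) : Prop :=
  ∀ a b : ℤ, max p.1 p'.1 + max p.2 p'.2 ≤ a → max p.1 p'.1 + max p.2 p'.2 ≤ b →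
    (lt a b ↔ lt' a b)

/-- Two digital segments are smooth: the antidiagonal distance function is
monotonically nondecreasing or nonincreasing on its domain. -/
def SmoothPair (S S' : Set Pt) : Prop :=
  (∀ r₁ s₁ r₂ s₂ : Pt, r₁ ∈ S → s₁ ∈ S' → r₂ ∈ S → s₂ ∈ S' →
      r₁.1 + r₁.2 = s₁.1 + s₁.2 → r₂.1 + r₂.2 = s₂.1 + s₂.2 →
      r₁.1 + r₁.2 ≤ r₂.1 + r₂.2 → r₁.1 - s₁.1 ≤ r₂.1 - s₂.1) ∨
  (∀ r₁ s₁ r₂ s₂ : Pt, r₁ ∈ S → s₁ ∈ S' → r₂ ∈ S → s₂ ∈ S' →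
      r₁.1 + r₁.2 = s₁.1 + s₁.2 → r₂.1 + r₂.2 = s₂.1 + s₂.2 →
      r₁.1 + r₁.2 ≤ r₂.1 + r₂.2 → r₂.1 - s₂.1 ≤ r₁.1 - s₁.1)

/-- The waterline assignment of linear orders. -/
def waterOrd (p : Pt) : ℤ → ℤ → Prop := fun a b =>
  if 0 ≤ p.2 then a < b
  else (p.1 ≤ a ∧ p.1 ≤ b ∧ a < b) ∨ (p.1 ≤ a ∧ b < p.1) ∨ (a < p.1 ∧ b < p.1 ∧ b < a)

/-- `p₃` has a conflicting priority with respect to `(lt,p)` and `(lt',p')`. -/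
def ConflictPriority (lt lt' : ℤ → ℤ → Prop) (p p' p₃ : Pt) : Prop :=
  ∃ a b : ℤ, a ∈ Ival p p₃ ∧ a ∈ Ival p' p₃ ∧ b ∈ Ival p p₃ ∧ b ∈ Ival p' p₃ ∧
    Hmem lt p p₃ b ∧ ¬ Hmem lt p p₃ a ∧ Hmem lt' p' p₃ a ∧ ¬ Hmem lt' p' p₃ b

/-!
Suppose `p.x ≤ p'.x` and `p'` is on or below the waterline, and put `c = C - 1`. In `I'` the rank of
`x` with respect to `≺_{p'}` is `x - p'.x + 1` if `p'.x ≤ x` and `c - x + 1` otherwise. In `I` its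
rank with respect to `≺_p` is at most `x - p.x + 1` if `p.x ≤ x` and equals `c - x + 1` otherwise.
Hence the first rank plus `p'.x - p.x` is never below the second, so an `x ∈ I ∩ I'` among the
`ℓ - (p'.x - p.x)` smallest of `I'` is among the `ℓ` smallest of `I`. The element `b` of a bad pair
would violate this.
-/

section WaterlineRanks

variable {p p' : Pt} {c x : ℤ}

theorem rankLE_waterOrd_le_of_le (hpx : p.1 ≤ x) :
    rankLE (waterOrd p) (Finset.Icc (p.1 + p.2) c) x ≤ x - p.1 + 1 := by
  have predecessors_subset :
      ((Finset.Icc (p.1 + p.2) c).filter fun y => waterOrd p y x ∨ y = x) ⊆ Finset.Icc p.1 x := by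
    intro y
    simp only [Finset.mem_filter, Finset.mem_Icc]
    unfold waterOrd
    split_ifs <;> omega
  calc rankLE (waterOrd p) (Finset.Icc (p.1 + p.2) c) x
    _ ≤ ((Finset.Icc p.1 x).card : ℤ) := Nat.cast_le.mpr <| Finset.card_le_card predecessors_subset
    _ = x - p.1 + 1 := by rw [Int.card_Icc_of_le _ _ (by omega)]; ring

theorem rankLE_waterOrd_eq_of_le (hp : p.2 ≤ 0) (hpx : p.1 ≤ x) (hxc : x ≤ c) :
    rankLE (waterOrd p) (Finset.Icc (p.1 + p.2) c) x = x - p.1 + 1 := by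
  have predecessors_eq :
      ((Finset.Icc (p.1 + p.2) c).filter fun y => waterOrd p y x ∨ y = x) = Finset.Icc p.1 x := by
    ext y
    simp only [Finset.mem_filter, Finset.mem_Icc]
    unfold waterOrd
    split_ifs <;> omega
  rw [rankLE, predecessors_eq, Int.card_Icc_of_le _ _ (by omega)]
  ring

theorem rankLE_waterOrd_eq_of_lt (hx : x ∈ Finset.Icc (p.1 + p.2) c) (hxp : x < p.1) :
    rankLE (waterOrd p) (Finset.Icc (p.1 + p.2) c) x = c - x + 1 := by
  rw [Finset.mem_Icc] at hx
  have predecessors_eq :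
      ((Finset.Icc (p.1 + p.2) c).filter fun y => waterOrd p y x ∨ y = x) = Finset.Icc x c := by
    ext y
    simp only [Finset.mem_filter, Finset.mem_Icc]
    unfold waterOrd
    split_ifs <;> omega
  rw [rankLE, predecessors_eq, Int.card_Icc_of_le _ _ (by omega)]
  ring

theorem rankLE_waterOrd_le_add_sub (hp' : p'.2 ≤ 0) (hpp' : p.1 ≤ p'.1)
    (hx : x ∈ Finset.Icc (p.1 + p.2) c) (hx' : x ∈ Finset.Icc (p'.1 + p'.2) c) :
    rankLE (waterOrd p) (Finset.Icc (p.1 + p.2) c) x ≤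
      rankLE (waterOrd p') (Finset.Icc (p'.1 + p'.2) c) x + (p'.1 - p.1) := by
  have hxc : x ≤ c := (Finset.mem_Icc.mp hx).2
  rcases lt_or_ge x p'.1 with hxp' | hp'x
  · rw [rankLE_waterOrd_eq_of_lt hx' hxp']
    rcases lt_or_ge x p.1 with hxp | hpx
    · rw [rankLE_waterOrd_eq_of_lt hx hxp]
      omega
    · have rank_le := rankLE_waterOrd_le_of_le (c := c) hpx
      omega
  · have rank_le := rankLE_waterOrd_le_of_le (c := c) (hpp'.trans hp'x)
    rw [rankLE_waterOrd_eq_of_le hp' hp'x hxc]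
    omega

theorem AmongSmallest.waterOrd_of_sub {k : ℤ} (hp' : p'.2 ≤ 0) (hpp' : p.1 ≤ p'.1)
    (hx : x ∈ Finset.Icc (p.1 + p.2) c)
    (hsmall : AmongSmallest (waterOrd p') (Finset.Icc (p'.1 + p'.2) c) (k - (p'.1 - p.1)) x) :
    AmongSmallest (waterOrd p) (Finset.Icc (p.1 + p.2) c) k x :=
  ⟨hx, (rankLE_waterOrd_le_add_sub hp' hpp' hx hsmall.1).trans (le_sub_iff_add_le.mp hsmall.2)⟩

end WaterlineRanks

theorem statement11_general (p p' : Pt) (hp' : p'.2 ≤ 0) (hpp' : p.1 ≤ p'.1) (a b : ℤ) :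
    ¬ BadPair (waterOrd p) (waterOrd p') p p' a b := by
  rintro ⟨-, C, ℓ, -, -, -, hb, -, -, -, hb_not_small, hb_small', -⟩
  exact hb_not_small (hb_small'.waterOrd_of_sub hp' hpp' hb)

/-- two waterline orders at points below the waterline have no bad pair. -/
theorem statement11 (p p' : Pt) (h : p.2 < 0) (h' : p'.2 < 0) (hx : p.1 < p'.1) :
    ∀ a b : ℤ, ¬ BadPair (waterOrd p) (waterOrd p') p p' a b :=
  statement11_general p p' h'.le hx.le
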